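/- Let Ω ⊂ ℝⁿ be open and assume φ ∈ Φ_w(Ω) satisfies (A0) and (aDec)_q for some q < ∞. If |Ω| < ∞, then C^∞_{0,0}(Ω) := {f ∈ C_c^∞(Ω) : ∫_Ω f dx = 0} is dense in L^φ_0(Ω) := {f ∈ L^φ(Ω) : ∫_Ω f dx = 0}. If |Ω| = ∞ and φ additionally satisfies (aInc)_p for some p > 1, then C^∞_{0,0}(Ω) is dense in L^φ(Ω). -/

import Mathlib

open MeasureTheory NNReal ENNReal Filter Set

noncomputable section

/-- `ℝⁿ` with the Euclidean structure. -/
abbrev RSp (n : ℕ) := EuclideanSpace ℝ (Fin n)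

variable {n : ℕ}

/-- A cube in `ℝⁿ` with sides parallel to the coordinate axes,
with center `c` and side length `2r`. -/
structure Cube (n : ℕ) where
  c : RSp n
  r : ℝ
  r_pos : 0 < r

/-- The underlying set of a cube. -/
def Cube.set (Q : Cube n) : Set (RSp n) := {y | ∀ i, |y i - Q.c i| ≤ Q.r}

/-- A weak Φ-function on `Ω` (the class `Φ_w(Ω)`). -/
structure IsWeakPhi (Ω : Set (RSp n)) (φ : RSp n → ℝ≥0 → ℝ≥0∞) : Prop where
  meas : ∀ f : RSp n → ℝ≥0, Measurable f →
    AEMeasurable (fun x => φ x (f x)) (volume.restrict Ω)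
  mono : ∀ x ∈ Ω, Monotone (φ x)
  zero : ∀ x ∈ Ω, φ x 0 = 0
  lim_zero : ∀ x ∈ Ω, Tendsto (fun t : ℝ≥0 => φ x t) (nhdsWithin 0 (Set.Ioi 0)) (nhds 0)
  lim_top : ∀ x ∈ Ω, Tendsto (fun t : ℝ≥0 => φ x t) atTop (nhds ∞)
  almost_inc : ∃ L : ℝ≥0, 1 ≤ L ∧ ∀ x ∈ Ω, ∀ s t : ℝ≥0, 0 < s → s < t →
    φ x s / (s : ℝ≥0∞) ≤ (L : ℝ≥0∞) * (φ x t / (t : ℝ≥0∞))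

/-- A convex Φ-function on `Ω` (the class `Φ_c(Ω)`): a weak Φ-function which is
additionally convex and left-continuous in `t` for a.e. `x ∈ Ω`. -/
structure IsConvexPhi (Ω : Set (RSp n)) (φ : RSp n → ℝ≥0 → ℝ≥0∞)
    extends IsWeakPhi Ω φ : Prop where
  convex : ∀ᵐ x ∂(volume.restrict Ω), ∀ s t a b : ℝ≥0, a + b = 1 →
    φ x (a * s + b * t) ≤ (a : ℝ≥0∞) * φ x s + (b : ℝ≥0∞) * φ x t
  left_cont : ∀ᵐ x ∂(volume.restrict Ω), ∀ t : ℝ≥0,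
    Tendsto (φ x) (nhdsWithin t (Set.Iio t)) (nhds (φ x t))

/-- A strong Φ-function on `Ω` (the class `Φ_s(Ω)`): a weak Φ-function which is
additionally convex and continuous into `[0,∞]` for a.e. `x ∈ Ω`. -/
structure IsStrongPhi (Ω : Set (RSp n)) (φ : RSp n → ℝ≥0 → ℝ≥0∞)
    extends IsWeakPhi Ω φ : Prop where
  convex : ∀ᵐ x ∂(volume.restrict Ω), ∀ s t a b : ℝ≥0, a + b = 1 →
    φ x (a * s + b * t) ≤ (a : ℝ≥0∞) * φ x s + (b : ℝ≥0∞) * φ x t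
  cont : ∀ᵐ x ∂(volume.restrict Ω), Continuous (φ x)

/-- The generalized (left-)inverse `φ⁻¹(x,t) = inf {τ ≥ 0 : φ(x,τ) ≥ t}`. -/
def phiInv (φ : RSp n → ℝ≥0 → ℝ≥0∞) (x : RSp n) (t : ℝ≥0∞) : ℝ≥0∞ :=
  sInf ((fun s : ℝ≥0 => (s : ℝ≥0∞)) '' {s : ℝ≥0 | t ≤ φ x s})

/-- The condition `(aInc)_p` on `Ω`: `t ↦ φ(x,t)/t^p` is almost increasing, uniformly in `x`. -/
def AInc (p : ℝ) (Ω : Set (RSp n)) (φ : RSp n → ℝ≥0 → ℝ≥0∞) : Prop :=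
  ∃ L : ℝ≥0, 1 ≤ L ∧ ∀ x ∈ Ω, ∀ s t : ℝ≥0, 0 < s → s < t →
    φ x s / (s : ℝ≥0∞) ^ p ≤ (L : ℝ≥0∞) * (φ x t / (t : ℝ≥0∞) ^ p)

/-- The condition `(aDec)_q` on `Ω`: `t ↦ φ(x,t)/t^q` is almost decreasing, uniformly in `x`. -/
def ADec (q : ℝ) (Ω : Set (RSp n)) (φ : RSp n → ℝ≥0 → ℝ≥0∞) : Prop :=
  ∃ L : ℝ≥0, 1 ≤ L ∧ ∀ x ∈ Ω, ∀ s t : ℝ≥0, 0 < s → s < t →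
    φ x t / (t : ℝ≥0∞) ^ q ≤ (L : ℝ≥0∞) * (φ x s / (s : ℝ≥0∞) ^ q)

/-- The condition `(A0)` on `Ω`: `β ≤ φ⁻¹(x,1) ≤ 1/β` for a.e. `x ∈ Ω`. -/
def A0 (Ω : Set (RSp n)) (φ : RSp n → ℝ≥0 → ℝ≥0∞) : Prop :=
  ∃ β : ℝ≥0, 0 < β ∧ β ≤ 1 ∧ ∀ᵐ x ∂(volume.restrict Ω),
    (β : ℝ≥0∞) ≤ phiInv φ x 1 ∧ phiInv φ x 1 ≤ (β : ℝ≥0∞)⁻¹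

/-- The condition `(A1)` (on all of `ℝⁿ`). -/
def A1 (φ : RSp n → ℝ≥0 → ℝ≥0∞) : Prop :=
  ∃ β : ℝ≥0, 0 < β ∧ β < 1 ∧ ∀ Q : Cube n, volume Q.set ≤ 1 →
    ∀ᵐ x ∂(volume.restrict Q.set), ∀ᵐ y ∂(volume.restrict Q.set),
      ∀ t : ℝ≥0∞, 1 ≤ t → t ≤ (volume Q.set)⁻¹ →
        (β : ℝ≥0∞) * phiInv φ x t ≤ phiInv φ y t

/-- The condition `(A2)` (on all of `ℝⁿ`). -/
def A2 (φ : RSp n → ℝ≥0 → ℝ≥0∞) : Prop :=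
  ∃ φi : ℝ≥0 → ℝ≥0∞, IsWeakPhi Set.univ (fun _ : RSp n => φi) ∧
  ∃ h : RSp n → ℝ≥0∞, (∫⁻ x, h x) < ∞ ∧ (∃ M : ℝ≥0, ∀ᵐ x ∂(volume : Measure (RSp n)), h x ≤ M) ∧
  ∃ β : ℝ≥0, 0 < β ∧ β ≤ 1 ∧ ∃ s : ℝ≥0, 0 < s ∧
    ∀ᵐ x ∂(volume : Measure (RSp n)), ∀ t : ℝ≥0,
      (φi t ≤ (s : ℝ≥0∞) → φ x (β * t) ≤ φi t + h x) ∧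
      (φ x t ≤ (s : ℝ≥0∞) → φi (β * t) ≤ φ x t + h x)

/-- Membership in the generalized Orlicz space `L^φ(Ω)`. -/
def MemOrlicz (φ : RSp n → ℝ≥0 → ℝ≥0∞) (Ω : Set (RSp n)) (f : RSp n → ℝ) : Prop :=
  AEMeasurable f (volume.restrict Ω) ∧
  ∃ lam : ℝ≥0, 0 < lam ∧ (∫⁻ x in Ω, φ x (lam * ‖f x‖₊) ∂volume) < ∞

/-- The Luxemburg (quasi)norm of `L^φ(Ω)`. -/
def orliczNorm (φ : RSp n → ℝ≥0 → ℝ≥0∞) (Ω : Set (RSp n)) (f : RSp n → ℝ) : ℝ≥0∞ :=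
  sInf ((fun lam : ℝ≥0 => (lam : ℝ≥0∞)) ''
    {lam : ℝ≥0 | 0 < lam ∧ (∫⁻ x in Ω, φ x (‖f x‖₊ / lam) ∂volume) ≤ 1})

/-- The canonical extension of `φ(x,·)` to `[0,∞]`. -/
def phiE (φ : RSp n → ℝ≥0 → ℝ≥0∞) (x : RSp n) (t : ℝ≥0∞) : ℝ≥0∞ :=
  ⨆ (s : ℝ≥0) (_ : (s : ℝ≥0∞) ≤ t), φ x s

/-- The Luxemburg (quasi)norm for `[0,∞]`-valued functions. -/
def orliczNormE (φ : RSp n → ℝ≥0 → ℝ≥0∞) (Ω : Set (RSp n)) (g : RSp n → ℝ≥0∞) : ℝ≥0∞ :=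
  sInf ((fun lam : ℝ≥0 => (lam : ℝ≥0∞)) ''
    {lam : ℝ≥0 | 0 < lam ∧ (∫⁻ x in Ω, phiE φ x (g x / (lam : ℝ≥0∞)) ∂volume) ≤ 1})

/-- The average `b_Q` of `b` over the cube `Q`. -/
def cubeAvg (Q : Cube n) (b : RSp n → ℝ) : ℝ := ⨍ x in Q.set, b x

/-- The BMO seminorm `‖b‖_*`. -/
def bmoNorm (b : RSp n → ℝ) : ℝ≥0∞ :=
  ⨆ Q : Cube n, (volume Q.set)⁻¹ * ∫⁻ x in Q.set, ‖b x - cubeAvg Q b‖₊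

/-- `b ∈ BMO(ℝⁿ)`. -/
def IsBMO (b : RSp n → ℝ) : Prop := LocallyIntegrable b volume ∧ bmoNorm b < ∞

/-- The non-centred Hardy–Littlewood maximal function (over axes-parallel cubes). -/
def maximal (f : RSp n → ℝ) (x : RSp n) : ℝ≥0∞ :=
  ⨆ (Q : Cube n) (_ : x ∈ Q.set), (volume Q.set)⁻¹ * ∫⁻ y in Q.set, (‖f y‖₊ : ℝ≥0∞) ∂volume

/-- The fractional maximal function `M_α`. -/
def fracMaximal (α : ℝ) (f : RSp n → ℝ) (x : RSp n) : ℝ≥0∞ :=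
  ⨆ (Q : Cube n) (_ : x ∈ Q.set),
    volume Q.set ^ (α / (n : ℝ) - 1) * ∫⁻ y in Q.set, (‖f y‖₊ : ℝ≥0∞) ∂volume

/-- The maximal function restricted to subcubes of `Q₀`. -/
def restMaximal (Q₀ : Cube n) (f : RSp n → ℝ) (x : RSp n) : ℝ≥0∞ :=
  ⨆ (Q : Cube n) (_ : x ∈ Q.set) (_ : Q.set ⊆ Q₀.set),
    (volume Q.set)⁻¹ * ∫⁻ y in Q.set, (‖f y‖₊ : ℝ≥0∞) ∂volume

/-- The fractional maximal function restricted to subcubes of `Q₀`. -/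
def restFracMaximal (α : ℝ) (Q₀ : Cube n) (f : RSp n → ℝ) (x : RSp n) : ℝ≥0∞ :=
  ⨆ (Q : Cube n) (_ : x ∈ Q.set) (_ : Q.set ⊆ Q₀.set),
    volume Q.set ^ (α / (n : ℝ) - 1) * ∫⁻ y in Q.set, (‖f y‖₊ : ℝ≥0∞) ∂volume

/-- The sharp maximal function `M♯`. -/
def sharpMaximal (f : RSp n → ℝ) (x : RSp n) : ℝ≥0∞ :=
  ⨆ (Q : Cube n) (_ : x ∈ Q.set),
    (volume Q.set)⁻¹ * ∫⁻ y in Q.set, (‖f y - ⨍ z in Q.set, f z‖₊ : ℝ≥0∞) ∂volume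

/-- The maximal commutator `M_b`. -/
def maximalComm (b f : RSp n → ℝ) (x : RSp n) : ℝ≥0∞ :=
  ⨆ (Q : Cube n) (_ : x ∈ Q.set),
    (volume Q.set)⁻¹ * ∫⁻ y in Q.set, (‖b x - b y‖₊ : ℝ≥0∞) * (‖f y‖₊ : ℝ≥0∞) ∂volume

/-- The fractional maximal commutator `M_{b,α}`. -/
def fracMaximalComm (α : ℝ) (b f : RSp n → ℝ) (x : RSp n) : ℝ≥0∞ :=
  ⨆ (Q : Cube n) (_ : x ∈ Q.set),
    volume Q.set ^ (α / (n : ℝ) - 1) *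
      ∫⁻ y in Q.set, (‖b x - b y‖₊ : ℝ≥0∞) * (‖f y‖₊ : ℝ≥0∞) ∂volume

/-- The commutator `[M,b]f = M(bf) − b·Mf` of the maximal operator. -/
def maximalCommutator (b f : RSp n → ℝ) (x : RSp n) : ℝ :=
  (maximal (fun y => b y * f y) x).toReal - b x * (maximal f x).toReal

/-- The commutator `[M_α,b]f = M_α(bf) − b·M_α f` of the fractional maximal operator. -/
def fracMaximalCommutator (α : ℝ) (b f : RSp n → ℝ) (x : RSp n) : ℝ :=
  (fracMaximal α (fun y => b y * f y) x).toReal - b x * (fracMaximal α f x).toReal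

/-- The Riesz potential `I_α f`. -/
def riesz (α : ℝ) (f : RSp n → ℝ) (x : RSp n) : ℝ :=
  ∫ y, f y / dist x y ^ ((n : ℝ) - α)

/-- The commutator `[I_α, b]f = I_α(bf) − b·I_α f` of the Riesz potential. -/
def rieszCommutator (α : ℝ) (b f : RSp n → ℝ) (x : RSp n) : ℝ :=
  riesz α (fun y => b y * f y) x - b x * riesz α f x

/-- The operator `I_{b,α} f(x) = ∫ |b(x)−b(y)|·|x−y|^{α−n} f(y) dy`. -/
def rieszAbs (α : ℝ) (b f : RSp n → ℝ) (x : RSp n) : ℝ :=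
  ∫ y, |b x - b y| / dist x y ^ ((n : ℝ) - α) * f y

/-- Equivalence `φ ≃ ψ` of Φ-functions. -/
def PhiEquiv (φ ψ : RSp n → ℝ≥0 → ℝ≥0∞) : Prop :=
  ∃ L : ℝ≥0, 1 ≤ L ∧ ∀ x : RSp n, ∀ t : ℝ≥0, ψ x (t / L) ≤ φ x t ∧ φ x t ≤ ψ x (L * t)

/-- Weak equivalence `φ ∼ ψ` of Φ-functions. -/
def PhiWeakEquiv (φ ψ : RSp n → ℝ≥0 → ℝ≥0∞) : Prop :=
  ∃ L : ℝ≥0, 1 ≤ L ∧ ∃ h : RSp n → ℝ≥0∞, (∫⁻ x, h x) < ∞ ∧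
    ∀ᵐ x ∂(volume : Measure (RSp n)), ∀ t : ℝ≥0,
      ψ x t ≤ φ x (L * t) + h x ∧ φ x t ≤ ψ x (L * t) + h x

/-- The relation `φ⁻¹(x,t) ≈ t^{α/n}·ψ⁻¹(x,t)` with constants independent of `x` and `t > 0`. -/
def FracInvRel (α : ℝ) (φ ψ : RSp n → ℝ≥0 → ℝ≥0∞) : Prop :=
  ∃ c₁ c₂ : ℝ≥0, 0 < c₁ ∧ ∀ x : RSp n, ∀ t : ℝ≥0, 0 < t →
    (c₁ : ℝ≥0∞) * ((t : ℝ≥0∞) ^ (α / (n : ℝ)) * phiInv ψ x t) ≤ phiInv φ x t ∧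
    phiInv φ x t ≤ (c₂ : ℝ≥0∞) * ((t : ℝ≥0∞) ^ (α / (n : ℝ)) * phiInv ψ x t)

/-- The characteristic function of a cube, as a real-valued function. -/
def cubeIndicator (Q : Cube n) : RSp n → ℝ := Q.set.indicator 1

end

/-- Smooth compactly supported functions on `Ω`. -/
def SmoothCompactSupp {n : ℕ} (Ω : Set (RSp n)) (g : RSp n → ℝ) : Prop :=
  ContDiff ℝ (⊤ : ℕ∞) g ∧ HasCompactSupport g ∧ tsupport g ⊆ Ω

/-! For every scale `c`, dominated convergence and bump functions give `g ∈ C_c^∞(Ω)` with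
`ρ_φ(c (f - g))` small. To restore the mean, subtract `(∫ g) η`, where `∫ η = 1`. If `f` is
integrable with mean zero, then `g` can be chosen close to `f` in `L¹` as well, so that `∫ g` is
small. If `|Ω| = ∞`, then `η` can be spread over a set of large measure; the integral of
`(∫ g) η` stays bounded while its height tends to zero, and `(aInc)_p` with `p > 1` makes
`φ(x, t) = o(t)`. -/

open scoped Topology

section Modular

variable {α E : Type*} [MeasurableSpace α] {μ : Measure α} {φ ψ : α → ℝ≥0 → ℝ≥0∞}

/-- An integrand `φ(x, t)` that is monotone in `t` and vanishes continuously at `t = 0`: a weak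
Φ-function relative to a measure, without its growth conditions (almost monotonicity of
`φ(x, t) / t` and divergence at infinity). -/
structure IsPhiIntegrand (φ : α → ℝ≥0 → ℝ≥0∞) (μ : Measure α) : Prop where
  aemeasurable_comp_of_measurable : ∀ u : α → ℝ≥0, Measurable u →
    AEMeasurable (fun x => φ x (u x)) μ
  monotone : ∀ᵐ x ∂μ, Monotone (φ x)
  tendsto_zero : ∀ᵐ x ∂μ, Tendsto (φ x) (𝓝 0) (𝓝 0)

/-- The doubling condition `Δ₂`, uniformly in `x`; for monotone integrands this is `(aDec)_q` for
some `q < ∞`. -/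
def IsDoubling (φ : α → ℝ≥0 → ℝ≥0∞) (μ : Measure α) : Prop :=
  ∃ K : ℝ≥0, ∀ᵐ x ∂μ, ∀ t : ℝ≥0, φ x (2 * t) ≤ K * φ x t

/-- Each slice `φ(·, M)` is essentially bounded. This is what bounded functions of bounded support
need in order to have finite modular. -/
def HasEssBoundedSlices (φ : α → ℝ≥0 → ℝ≥0∞) (μ : Measure α) : Prop :=
  ∀ M : ℝ≥0, ∃ C : ℝ≥0, ∀ᵐ x ∂μ, φ x M ≤ C

/-- `φ(x, t) = o(t)` as `t → 0`, uniformly in `x`. It makes the modular of a function of small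
height and fixed integral small. -/
def IsUniformLittleOAtZero (φ : α → ℝ≥0 → ℝ≥0∞) (μ : Measure α) : Prop :=
  ∀ ε : ℝ≥0, 0 < ε → ∃ δ : ℝ≥0, 0 < δ ∧ ∀ᵐ x ∂μ, ∀ t ≤ δ, φ x t ≤ (ε * t : ℝ≥0)

/-- The modular `ρ_φ(c f) = ∫ φ(x, c|f(x)|) dμ`. The scale `c` is an argument of its own because
every triangle inequality doubles it. -/
noncomputable def phiModular [NNNorm E] (φ : α → ℝ≥0 → ℝ≥0∞) (μ : Measure α) (c : ℝ≥0)
    (f : α → E) : ℝ≥0∞ :=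
  ∫⁻ x, φ x (c * ‖f x‖₊) ∂μ

theorem phiModular_coe [NNNorm E] (c : ℝ≥0) (f : α → E) :
    phiModular (fun _ t => (t : ℝ≥0∞)) μ c f = c * ∫⁻ x, ‖f x‖₊ ∂μ := by
  simp only [phiModular, ENNReal.coe_mul, lintegral_const_mul' _ _ ENNReal.coe_ne_top]

theorem isPhiIntegrand_coe : IsPhiIntegrand (fun (_ : α) (t : ℝ≥0) => (t : ℝ≥0∞)) μ where
  aemeasurable_comp_of_measurable _ hu := hu.coe_nnreal_ennreal.aemeasurable
  monotone := ae_of_all _ fun _ => ENNReal.coe_mono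
  tendsto_zero := ae_of_all _ fun _ => ENNReal.continuous_coe.tendsto 0

theorem hasEssBoundedSlices_coe :
    HasEssBoundedSlices (fun (_ : α) (t : ℝ≥0) => (t : ℝ≥0∞)) μ :=
  fun M => ⟨M, ae_of_all _ fun _ => le_rfl⟩

theorem HasEssBoundedSlices.add (hφ : HasEssBoundedSlices φ μ) (hψ : HasEssBoundedSlices ψ μ) :
    HasEssBoundedSlices (φ + ψ) μ := by
  intro M
  obtain ⟨C, hC⟩ := hφ M
  obtain ⟨D, hD⟩ := hψ M
  refine ⟨C + D, ?_⟩
  filter_upwards [hC, hD] with x hx hx'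
  simpa only [Pi.add_apply, ENNReal.coe_add] using add_le_add hx hx'

namespace IsPhiIntegrand

theorem add (hφ : IsPhiIntegrand φ μ) (hψ : IsPhiIntegrand ψ μ) : IsPhiIntegrand (φ + ψ) μ where
  aemeasurable_comp_of_measurable u hu :=
    (hφ.aemeasurable_comp_of_measurable u hu).add (hψ.aemeasurable_comp_of_measurable u hu)
  monotone := by
    filter_upwards [hφ.monotone, hψ.monotone] with x hx hx' using hx.add hx'
  tendsto_zero := by
    filter_upwards [hφ.tendsto_zero, hψ.tendsto_zero] with x hx hx'
    have h := hx.add hx'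
    rwa [add_zero] at h

theorem aemeasurable_comp (hφ : IsPhiIntegrand φ μ) {u : α → ℝ≥0} (hu : AEMeasurable u μ) :
    AEMeasurable (fun x => φ x (u x)) μ :=
  (hφ.aemeasurable_comp_of_measurable _ hu.measurable_mk).congr <|
    hu.ae_eq_mk.symm.mono fun x hx => by simp only [hx]

theorem ae_apply_zero (hφ : IsPhiIntegrand φ μ) : ∀ᵐ x ∂μ, φ x 0 = 0 :=
  hφ.tendsto_zero.mono fun _ => eq_of_tendsto_nhds

theorem tendsto_lintegral_comp_zero (hφ : IsPhiIntegrand φ μ) {ι : Type*} {l : Filter ι}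
    [l.IsCountablyGenerated] {u : ι → α → ℝ≥0} {v : α → ℝ≥0} (hu : ∀ i, AEMeasurable (u i) μ)
    (huv : ∀ᶠ i in l, ∀ᵐ x ∂μ, u i x ≤ v x) (hv : ∫⁻ x, φ x (v x) ∂μ ≠ ∞)
    (hlim : ∀ᵐ x ∂μ, Tendsto (fun i => u i x) l (𝓝 0)) :
    Tendsto (fun i => ∫⁻ x, φ x (u i x) ∂μ) l (𝓝 0) := by
  rw [← lintegral_zero (μ := μ)]
  refine tendsto_lintegral_filter_of_dominated_convergence' (fun x => φ x (v x))
    (.of_forall fun i => hφ.aemeasurable_comp (hu i)) (huv.mono fun i hi => ?_) hv ?_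
  · filter_upwards [hi, hφ.monotone] with x hx hmono using hmono hx
  · filter_upwards [hlim, hφ.tendsto_zero] with x hx hzero using hzero.comp hx

section NormedGroup

variable [NormedAddCommGroup E] {f g : α → E} {c c₀ : ℝ≥0}

theorem aemeasurable_phiModular (hφ : IsPhiIntegrand φ μ) (hf : AEStronglyMeasurable f μ)
    (c : ℝ≥0) : AEMeasurable (fun x => φ x (c * ‖f x‖₊)) μ :=
  hφ.aemeasurable_comp (hf.nnnorm.aemeasurable.const_mul c)

theorem phiModular_add_integrand (hφ : IsPhiIntegrand φ μ) (hf : AEStronglyMeasurable f μ)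
    (c : ℝ≥0) : phiModular (φ + ψ) μ c f = phiModular φ μ c f + phiModular ψ μ c f :=
  lintegral_add_left' (hφ.aemeasurable_phiModular hf c) _

theorem phiModular_mono_scale (hφ : IsPhiIntegrand φ μ) (h : c ≤ c₀) :
    phiModular φ μ c f ≤ phiModular φ μ c₀ f := by
  refine lintegral_mono_ae ?_
  filter_upwards [hφ.monotone] with x hx using hx (by gcongr)

theorem phiModular_add_le (hφ : IsPhiIntegrand φ μ) (hf : AEStronglyMeasurable f μ) (c : ℝ≥0)
    (g : α → E) :
    phiModular φ μ c (f + g) ≤ phiModular φ μ (2 * c) f + phiModular φ μ (2 * c) g := by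
  rw [phiModular, phiModular, phiModular,
    ← lintegral_add_left' (hφ.aemeasurable_phiModular hf _)]
  refine lintegral_mono_ae ?_
  filter_upwards [hφ.monotone] with x hx
  have hmax : c * ‖(f + g) x‖₊ ≤ max (2 * c * ‖f x‖₊) (2 * c * ‖g x‖₊) :=
    calc c * ‖(f + g) x‖₊ ≤ c * (‖f x‖₊ + ‖g x‖₊) := by gcongr; exact nnnorm_add_le _ _
      _ ≤ c * (2 * max ‖f x‖₊ ‖g x‖₊) := by
        gcongr
        rw [two_mul]
        exact add_le_add (le_max_left _ _) (le_max_right _ _)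
      _ = max (2 * c * ‖f x‖₊) (2 * c * ‖g x‖₊) := by rw [← mul_max]; ring
  calc φ x (c * ‖(f + g) x‖₊) ≤ φ x (max (2 * c * ‖f x‖₊) (2 * c * ‖g x‖₊)) := hx hmax
    _ = max (φ x (2 * c * ‖f x‖₊)) (φ x (2 * c * ‖g x‖₊)) := hx.map_max
    _ ≤ φ x (2 * c * ‖f x‖₊) + φ x (2 * c * ‖g x‖₊) := max_le_add_of_nonneg zero_le zero_le

theorem phiModular_le_mul_measure_support (hφ : IsPhiIntegrand φ μ) {M : ℝ≥0} {C : ℝ≥0∞}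
    (hC : ∀ᵐ x ∂μ, φ x (c * M) ≤ C) (hf : ∀ x, ‖f x‖₊ ≤ M) :
    phiModular φ μ c f ≤ C * μ (Function.support f) := by
  refine (lintegral_mono_ae ?_).trans (lintegral_indicator_const_le (Function.support f) C)
  filter_upwards [hC, hφ.monotone, hφ.ae_apply_zero] with x hx hmono hzero
  by_cases hfx : f x = 0
  · simp [hfx, hzero]
  · rw [indicator_of_mem (Function.mem_support.2 hfx)]
    exact (hmono (by gcongr; exact hf x)).trans hx

theorem phiModular_ne_top_of_isDoubling (hφ : IsPhiIntegrand φ μ) (hΔ : IsDoubling φ μ)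
    (hc₀ : 0 < c₀) (hf : phiModular φ μ c₀ f ≠ ∞) (c : ℝ≥0) : phiModular φ μ c f ≠ ∞ := by
  obtain ⟨K, hK⟩ := hΔ
  have hpow : ∀ k : ℕ, phiModular φ μ (2 ^ k * c₀) f ≠ ∞ := by
    intro k
    induction k with
    | zero => simpa using hf
    | succ k ih =>
      refine ne_top_of_le_ne_top (ENNReal.mul_ne_top (ENNReal.coe_ne_top (r := K)) ih) ?_
      rw [phiModular, phiModular, ← lintegral_const_mul' _ _ ENNReal.coe_ne_top]
      refine lintegral_mono_ae ?_
      filter_upwards [hK] with x hx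
      rw [show 2 ^ (k + 1) * c₀ * ‖f x‖₊ = 2 * (2 ^ k * c₀ * ‖f x‖₊) by ring]
      exact hx _
  obtain ⟨k, hk⟩ := pow_unbounded_of_one_lt (c / c₀) one_lt_two
  exact ne_top_of_le_ne_top (hpow k) (hφ.phiModular_mono_scale ((div_le_iff₀ hc₀).1 hk.le))

theorem tendsto_phiModular_zero (hφ : IsPhiIntegrand φ μ) (hf : AEStronglyMeasurable f μ)
    (hc₀ : 0 < c₀) (hfin : phiModular φ μ c₀ f ≠ ∞) :
    Tendsto (fun c => phiModular φ μ c f) (𝓝 0) (𝓝 0) := by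
  refine hφ.tendsto_lintegral_comp_zero (fun c => hf.nnnorm.aemeasurable.const_mul c) ?_ hfin
    (ae_of_all _ fun x => ?_)
  · filter_upwards [Iio_mem_nhds hc₀] with c hc
    exact ae_of_all _ fun x => mul_le_mul_left (mem_Iio.1 hc).le _
  · simpa using (tendsto_id (x := 𝓝 (0 : ℝ≥0))).mul_const ‖f x‖₊

end NormedGroup

end IsPhiIntegrand

theorem IsDoubling.hasEssBoundedSlices (hΔ : IsDoubling φ μ) (hφ : ∀ᵐ x ∂μ, Monotone (φ x))
    {b C : ℝ≥0} (hb : 0 < b) (hbC : ∀ᵐ x ∂μ, φ x b ≤ C) : HasEssBoundedSlices φ μ := by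
  obtain ⟨K, hK⟩ := hΔ
  intro M
  obtain ⟨k, hk⟩ := pow_unbounded_of_one_lt (M / b) one_lt_two
  refine ⟨K ^ k * C, ?_⟩
  filter_upwards [hK, hφ, hbC] with x hx hmono hxb
  have hpow : ∀ j : ℕ, φ x (2 ^ j * b) ≤ (K ^ j * C : ℝ≥0) := by
    intro j
    induction j with
    | zero => simpa using hxb
    | succ j ih =>
      calc φ x (2 ^ (j + 1) * b) = φ x (2 * (2 ^ j * b)) := by ring_nf
        _ ≤ K * φ x (2 ^ j * b) := hx _
        _ ≤ K * (K ^ j * C : ℝ≥0) := by gcongr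
        _ = (K ^ (j + 1) * C : ℝ≥0) := by rw [← ENNReal.coe_mul]; ring_nf
  exact (hmono ((div_le_iff₀ hb).1 hk.le)).trans (hpow k)

theorem IsUniformLittleOAtZero.phiModular_le [NormedAddCommGroup E]
    (hφ : IsUniformLittleOAtZero φ μ) {ε : ℝ≥0} (hε : 0 < ε) :
    ∃ δ : ℝ≥0, 0 < δ ∧ ∀ (c : ℝ≥0) (f : α → E), (∀ x, c * ‖f x‖₊ ≤ δ) →
      phiModular φ μ c f ≤ ε * (c * ∫⁻ x, ‖f x‖₊ ∂μ) := by
  obtain ⟨δ, hδ, h⟩ := hφ ε hε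
  refine ⟨δ, hδ, fun c f hf => ?_⟩
  rw [← lintegral_const_mul' _ _ ENNReal.coe_ne_top, ← lintegral_const_mul' _ _ ENNReal.coe_ne_top]
  refine lintegral_mono_ae ?_
  filter_upwards [h] with x hx
  exact_mod_cast hx _ (hf x)

end Modular

section SimpleFunctions

variable {α E : Type*} [MeasurableSpace α] {μ : Measure α} [NormedAddCommGroup E]

theorem exists_simpleFunc_indicator_spanningSets_tendsto (μ : Measure α) [SigmaFinite μ]
    {f : α → E} (hf : StronglyMeasurable f) :
    ∃ s : ℕ → SimpleFunc α E, ∀ x,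
      Tendsto (fun k => (spanningSets μ k).indicator (s k) x) atTop (𝓝 (f x)) ∧
      ∀ k, ‖f x - (spanningSets μ k).indicator (s k) x‖₊ ≤ ‖f x‖₊ := by
  borelize E
  have := hf.separableSpace_range_union_singleton (b := 0)
  let s := SimpleFunc.approxOn f hf.measurable (range f ∪ {0}) 0 (by simp)
  refine ⟨s, fun x => ⟨?_, fun k => ?_⟩⟩
  · have hs : Tendsto (fun k => s k x) atTop (𝓝 (f x)) :=
      SimpleFunc.tendsto_approxOn _ _ (subset_closure (by simp))
    refine hs.congr' ?_
    filter_upwards [eventually_mem_spanningSets μ x] with k hk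
    rw [indicator_of_mem hk]
  · by_cases hx : x ∈ spanningSets μ k
    · rw [indicator_of_mem hx, ← nnnorm_neg, neg_sub]
      have h := SimpleFunc.edist_approxOn_le hf.measurable (s := range f ∪ {0})
        (y₀ := 0) (by simp) x k
      rw [edist_zero_left, edist_eq_enorm_sub] at h
      exact ENNReal.coe_le_coe.1 h
    · rw [indicator_of_notMem hx, sub_zero]

theorem IsPhiIntegrand.exists_simpleFunc_phiModular_sub_le {φ : α → ℝ≥0 → ℝ≥0∞} [SigmaFinite μ]
    (hφ : IsPhiIntegrand φ μ) {f : α → E} (hf : AEStronglyMeasurable f μ) {c : ℝ≥0}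
    (hfin : phiModular φ μ c f ≠ ∞) {ε : ℝ≥0∞} (hε : 0 < ε) :
    ∃ (s : SimpleFunc α E) (A : Set α), MeasurableSet A ∧ μ A ≠ ∞ ∧
      phiModular φ μ c (f - A.indicator s) ≤ ε := by
  obtain ⟨s, hs⟩ := exists_simpleFunc_indicator_spanningSets_tendsto μ hf.stronglyMeasurable_mk
  have hmeas : ∀ k, MeasurableSet (spanningSets μ k) := measurableSet_spanningSets μ
  have hlim : Tendsto (fun k => phiModular φ μ c (f - (spanningSets μ k).indicator (s k)))
      atTop (𝓝 0) := by
    refine hφ.tendsto_lintegral_comp_zero (fun k => ?_) (.of_forall fun k => ?_) hfin ?_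
    · exact (hf.sub ((s k).stronglyMeasurable.indicator
        (hmeas k)).aestronglyMeasurable).nnnorm.aemeasurable.const_mul c
    · filter_upwards [hf.ae_eq_mk] with x hx
      rw [Pi.sub_apply, hx]
      gcongr
      exact (hs x).2 k
    · filter_upwards [hf.ae_eq_mk] with x hx
      simpa [hx] using (((hs x).1.const_sub (f x)).nnnorm.const_mul c)
  obtain ⟨k, hk⟩ := (hlim.eventually (gt_mem_nhds hε)).exists
  exact ⟨s k, spanningSets μ k, hmeas k, (measure_spanningSets_lt_top μ k).ne, hk.le⟩

end SimpleFunctions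

section SmoothFunctions

variable {n : ℕ} {Ω K : Set (RSp n)} {f g : RSp n → ℝ} {μ : Measure (RSp n)}

namespace SmoothCompactSupp

theorem zero : SmoothCompactSupp Ω 0 :=
  ⟨contDiff_const, HasCompactSupport.zero, by simp [tsupport]⟩

theorem mono {U : Set (RSp n)} (hf : SmoothCompactSupp U f) (h : U ⊆ Ω) :
    SmoothCompactSupp Ω f :=
  ⟨hf.1, hf.2.1, hf.2.2.trans h⟩

theorem add (hf : SmoothCompactSupp Ω f) (hg : SmoothCompactSupp Ω g) :
    SmoothCompactSupp Ω (f + g) :=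
  ⟨hf.1.add hg.1, hf.2.1.add hg.2.1, (tsupport_add f g).trans (union_subset hf.2.2 hg.2.2)⟩

theorem const_smul (hf : SmoothCompactSupp Ω f) (c : ℝ) : SmoothCompactSupp Ω (c • f) :=
  ⟨hf.1.const_smul c, hf.2.1.smul_left (f := fun _ => c),
    (tsupport_smul_subset_right (fun _ => c) f).trans hf.2.2⟩

theorem aestronglyMeasurable (hf : SmoothCompactSupp Ω f) : AEStronglyMeasurable f μ :=
  hf.1.continuous.aestronglyMeasurable

theorem integrable [IsLocallyFiniteMeasure μ] (hf : SmoothCompactSupp Ω f) : Integrable f μ :=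
  hf.1.continuous.integrable_of_hasCompactSupport hf.2.1

theorem phiModular_ne_top [IsLocallyFiniteMeasure μ] {φ : RSp n → ℝ≥0 → ℝ≥0∞}
    (hf : SmoothCompactSupp Ω f) (hφ : IsPhiIntegrand φ μ) (hb : HasEssBoundedSlices φ μ)
    (c : ℝ≥0) : phiModular φ μ c f ≠ ∞ := by
  obtain ⟨M, hM⟩ := hf.2.1.exists_bound_of_continuous hf.1.continuous
  obtain ⟨C, hC⟩ := hb (c * M.toNNReal)
  have hM' : ∀ x, ‖f x‖₊ ≤ M.toNNReal := fun x => NNReal.le_toNNReal_of_coe_le (hM x)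
  have hsupp : μ (Function.support f) ≠ ∞ :=
    ((measure_mono (subset_tsupport f)).trans_lt hf.2.1.isCompact.measure_lt_top).ne
  exact ne_top_of_le_ne_top (ENNReal.mul_ne_top ENNReal.coe_ne_top hsupp)
    (hφ.phiModular_le_mul_measure_support hC hM')

theorem sub_integral_smul {η : RSp n → ℝ} (hg : SmoothCompactSupp Ω g)
    (hη : SmoothCompactSupp Ω η) : SmoothCompactSupp Ω (g - (∫ x, g x ∂μ) • η) := by
  simpa only [neg_smul, ← sub_eq_add_neg] using hg.add (hη.const_smul (-∫ x, g x ∂μ))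

theorem integral_sub_integral_smul_eq_zero [IsLocallyFiniteMeasure μ] {η : RSp n → ℝ}
    (hg : SmoothCompactSupp Ω g) (hη : SmoothCompactSupp Ω η) (hη1 : ∫ x, η x ∂μ = 1) :
    ∫ x, (g - (∫ y, g y ∂μ) • η) x ∂μ = 0 := by
  rw [integral_sub' hg.integrable (hη.integrable.smul _)]
  simp only [Pi.smul_apply, smul_eq_mul, integral_const_mul, hη1, mul_one, sub_self]

end SmoothCompactSupp

theorem exists_smoothCompactSupp_eq_one (hΩ : IsOpen Ω) (hK : IsCompact K) (hKΩ : K ⊆ Ω) :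
    ∃ χ : RSp n → ℝ, SmoothCompactSupp Ω χ ∧ (∀ x, χ x ∈ Icc (0 : ℝ) 1) ∧ EqOn χ 1 K := by
  obtain ⟨K', hK', hKK', hK'Ω⟩ := exists_compact_between hK hΩ hKΩ
  obtain ⟨χ, hχ, hrange, hsupp, hone⟩ := exists_contMDiff_support_eq_eq_one_iff
    (modelWithCornersSelf ℝ (RSp n)) (n := (⊤ : ℕ∞)) isOpen_interior hK.isClosed hKK'
  have htsupp : tsupport χ ⊆ K' :=
    closure_minimal (hsupp.trans_subset interior_subset) hK'.isClosed
  exact ⟨χ, ⟨contMDiff_iff_contDiff.1 hχ, hK'.of_isClosed_subset (isClosed_tsupport χ) htsupp,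
    htsupp.trans hK'Ω⟩, fun x => hrange ⟨x, rfl⟩, fun x hx => (hone x).1 hx⟩

theorem exists_smoothCompactSupp_lt_integral [IsLocallyFiniteMeasure μ] (hΩ : IsOpen Ω) {N : ℝ≥0}
    (hN : N < μ Ω) :
    ∃ χ : RSp n → ℝ, SmoothCompactSupp Ω χ ∧ (∀ x, χ x ∈ Icc (0 : ℝ) 1) ∧ N < ∫ x, χ x ∂μ := by
  obtain ⟨K, hKΩ, hK, hNK⟩ := hΩ.exists_lt_isCompact hN
  obtain ⟨χ, hχ, hχ01, hχ1⟩ := exists_smoothCompactSupp_eq_one hΩ hK hKΩ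
  refine ⟨χ, hχ, hχ01, ?_⟩
  calc (N : ℝ) < μ.real K := by
        simpa [Measure.real] using
          (ENNReal.toReal_lt_toReal ENNReal.coe_ne_top hK.measure_lt_top.ne).2 hNK
    _ = ∫ x in K, χ x ∂μ := by
        rw [setIntegral_congr_fun hK.measurableSet hχ1]
        simp
    _ ≤ ∫ x, χ x ∂μ := setIntegral_le_integral hχ.integrable (ae_of_all _ fun x => (hχ01 x).1)

theorem exists_smoothCompactSupp_integral_eq_one [IsLocallyFiniteMeasure μ] (hΩ : IsOpen Ω)
    {N : ℝ≥0} (hN : N < μ Ω) :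
    ∃ η : RSp n → ℝ, SmoothCompactSupp Ω η ∧ ∫ x, η x ∂μ = 1 ∧ ∫⁻ x, ‖η x‖₊ ∂μ = 1 ∧
      ∀ x, N * ‖η x‖₊ ≤ 1 := by
  obtain ⟨χ, hχ, hχ01, hNχ⟩ := exists_smoothCompactSupp_lt_integral hΩ hN
  set V := ∫ x, χ x ∂μ
  have hV : 0 < V := N.coe_nonneg.trans_lt hNχ
  have hη : SmoothCompactSupp Ω (V⁻¹ • χ) := hχ.const_smul _
  have hnonneg : ∀ x, 0 ≤ (V⁻¹ • χ) x := fun x => mul_nonneg (by positivity) (hχ01 x).1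
  have hint : ∫ x, (V⁻¹ • χ) x ∂μ = 1 := by
    simp only [Pi.smul_apply, smul_eq_mul, integral_const_mul]
    exact inv_mul_cancel₀ hV.ne'
  refine ⟨V⁻¹ • χ, hη, hint, ?_, fun x => ?_⟩
  · calc ∫⁻ x, ‖(V⁻¹ • χ) x‖₊ ∂μ = ENNReal.ofReal (∫ x, ‖(V⁻¹ • χ) x‖ ∂μ) :=
          (ofReal_integral_norm_eq_lintegral_enorm hη.integrable).symm
      _ = 1 := by simp only [Real.norm_of_nonneg (hnonneg _), hint, ENNReal.ofReal_one]
  · rw [← NNReal.coe_le_coe, NNReal.coe_mul, coe_nnnorm, Real.norm_of_nonneg (hnonneg x),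
      NNReal.coe_one]
    calc N * (V⁻¹ * χ x) ≤ V * (V⁻¹ * 1) := by
          gcongr
          exacts [hnonneg x, (hχ01 x).2]
      _ = 1 := by field_simp

theorem exists_smoothCompactSupp_measure_ne_indicator_le [IsLocallyFiniteMeasure μ]
    (hΩ : IsOpen Ω) (hμ : ∀ᵐ x ∂μ, x ∈ Ω) {A : Set (RSp n)} (hA : MeasurableSet A)
    (hAfin : μ A ≠ ∞) {ε : ℝ≥0∞} (hε : ε ≠ 0) :
    ∃ χ : RSp n → ℝ, SmoothCompactSupp Ω χ ∧ (∀ x, χ x ∈ Icc (0 : ℝ) 1) ∧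
      μ {x | A.indicator 1 x ≠ χ x} ≤ ε := by
  have hB : MeasurableSet (A ∩ Ω) := hA.inter hΩ.measurableSet
  have hBfin : μ (A ∩ Ω) ≠ ∞ := measure_ne_top_of_subset inter_subset_left hAfin
  obtain ⟨K, hKB, hK, hBK⟩ := hB.exists_isCompact_sdiff_lt hBfin (ENNReal.half_pos hε).ne'
  obtain ⟨U, hBU, hU, -, hUB⟩ := hB.exists_isOpen_sdiff_lt hBfin (ENNReal.half_pos hε).ne'
  obtain ⟨χ, hχ, hχ01, hχ1⟩ := exists_smoothCompactSupp_eq_one (hU.inter hΩ) hK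
    fun x hx => ⟨hBU (hKB hx), (hKB hx).2⟩
  have hsub : {x | A.indicator 1 x ≠ χ x} ⊆ (U \ (A ∩ Ω) ∪ (A ∩ Ω) \ K) ∪ Ωᶜ := by
    intro x hx
    by_contra hout
    simp only [mem_union, Set.mem_sdiff, mem_inter_iff, mem_compl_iff] at hout
    refine hx ?_
    by_cases hxK : x ∈ K
    · rw [indicator_of_mem (hKB hxK).1, hχ1 hxK]
    · have hxA : x ∉ A := by tauto
      have hxU : x ∉ U := by tauto
      rw [indicator_of_notMem hxA,
        image_eq_zero_of_notMem_tsupport fun h => hxU (hχ.2.2 h).1]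
  refine ⟨χ, hχ.mono inter_subset_right, hχ01, ?_⟩
  calc μ {x | A.indicator 1 x ≠ χ x}
      ≤ μ (U \ (A ∩ Ω)) + μ ((A ∩ Ω) \ K) + μ Ωᶜ :=
        (measure_mono hsub).trans <| (measure_union_le _ _).trans <|
          add_le_add_left (measure_union_le _ _) _
    _ ≤ ε / 2 + ε / 2 + 0 := add_le_add (add_le_add hUB.le hBK.le) hμ.le
    _ = ε := by rw [add_zero, ENNReal.add_halves]

end SmoothFunctions

section Density

variable {n : ℕ} {Ω : Set (RSp n)} {f g : RSp n → ℝ} {μ : Measure (RSp n)}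
  {φ : RSp n → ℝ≥0 → ℝ≥0∞}

/-- `f` is a limit of functions in `C_c^∞(Ω)` with respect to the modular at every scale, which is
how convergence in the Luxemburg quasinorm is expressed through the modular. -/
def IsSmoothlyApproximable (Ω : Set (RSp n)) (φ : RSp n → ℝ≥0 → ℝ≥0∞) (μ : Measure (RSp n))
    (f : RSp n → ℝ) : Prop :=
  ∀ (c : ℝ≥0) (ε : ℝ≥0∞), 0 < ε → ∃ g, SmoothCompactSupp Ω g ∧ phiModular φ μ c (f - g) ≤ ε

/-- The analogue of `IsSmoothlyApproximable` for approximants in `C^∞_{0,0}(Ω)`, that is, with the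
additional requirement of a vanishing integral. -/
def IsMeanZeroApproximable (Ω : Set (RSp n)) (φ : RSp n → ℝ≥0 → ℝ≥0∞) (μ : Measure (RSp n))
    (f : RSp n → ℝ) : Prop :=
  ∀ (c : ℝ≥0) (ε : ℝ≥0∞), 0 < ε →
    ∃ g, SmoothCompactSupp Ω g ∧ ∫ x, g x ∂μ = 0 ∧ phiModular φ μ c (f - g) ≤ ε

namespace IsSmoothlyApproximable

theorem add (hφ : IsPhiIntegrand φ μ) (hfm : AEStronglyMeasurable f μ)
    (hf : IsSmoothlyApproximable Ω φ μ f) (hg : IsSmoothlyApproximable Ω φ μ g) :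
    IsSmoothlyApproximable Ω φ μ (f + g) := by
  intro c ε hε
  obtain ⟨u, hu, hfu⟩ := hf (2 * c) (ε / 2) (ENNReal.half_pos hε.ne')
  obtain ⟨v, hv, hgv⟩ := hg (2 * c) (ε / 2) (ENNReal.half_pos hε.ne')
  refine ⟨u + v, hu.add hv, ?_⟩
  calc phiModular φ μ c (f + g - (u + v))
      = phiModular φ μ c ((f - u) + (g - v)) := by rw [add_sub_add_comm]
    _ ≤ phiModular φ μ (2 * c) (f - u) + phiModular φ μ (2 * c) (g - v) :=
        hφ.phiModular_add_le (hfm.sub hu.aestronglyMeasurable) _ _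
    _ ≤ ε / 2 + ε / 2 := add_le_add hfu hgv
    _ = ε := ENNReal.add_halves ε

theorem of_forall_exists (hφ : IsPhiIntegrand φ μ) (hfm : AEStronglyMeasurable f μ)
    (h : ∀ (c : ℝ≥0) (ε : ℝ≥0∞), 0 < ε → ∃ u, AEStronglyMeasurable u μ ∧
      IsSmoothlyApproximable Ω φ μ u ∧ phiModular φ μ c (f - u) ≤ ε) :
    IsSmoothlyApproximable Ω φ μ f := by
  intro c ε hε
  obtain ⟨u, hum, hu, hfu⟩ := h (2 * c) (ε / 2) (ENNReal.half_pos hε.ne')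
  obtain ⟨v, hv, huv⟩ := hu (2 * c) (ε / 2) (ENNReal.half_pos hε.ne')
  refine ⟨v, hv, ?_⟩
  calc phiModular φ μ c (f - v) = phiModular φ μ c ((f - u) + (u - v)) := by
        rw [sub_add_sub_cancel]
    _ ≤ phiModular φ μ (2 * c) (f - u) + phiModular φ μ (2 * c) (u - v) :=
        hφ.phiModular_add_le (hfm.sub hum) _ _
    _ ≤ ε / 2 + ε / 2 := add_le_add hfu huv
    _ = ε := ENNReal.add_halves ε

variable [IsLocallyFiniteMeasure μ]

theorem indicator_const (hΩ : IsOpen Ω) (hμ : ∀ᵐ x ∂μ, x ∈ Ω) (hφ : IsPhiIntegrand φ μ)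
    (hb : HasEssBoundedSlices φ μ) {A : Set (RSp n)} (hA : MeasurableSet A) (hAfin : μ A ≠ ∞)
    (a : ℝ) : IsSmoothlyApproximable Ω φ μ (A.indicator fun _ => a) := by
  intro c ε hε
  obtain ⟨C, hC⟩ := hb (c * ‖a‖₊)
  have hε' : ε / C ≠ 0 := (ENNReal.div_pos hε.ne' ENNReal.coe_ne_top).ne'
  obtain ⟨χ, hχ, hχ01, hχA⟩ :=
    exists_smoothCompactSupp_measure_ne_indicator_le hΩ hμ hA hAfin hε'
  have hdiff : (A.indicator fun _ => a) - a • χ = fun x => a * (A.indicator 1 x - χ x) := by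
    ext x
    by_cases hx : x ∈ A <;> simp [hx, mul_sub]
  refine ⟨a • χ, hχ.const_smul a, ?_⟩
  rw [hdiff]
  have hbound : ∀ x, ‖a * (A.indicator 1 x - χ x)‖₊ ≤ ‖a‖₊ := by
    intro x
    have habs : |A.indicator 1 x - χ x| ≤ 1 := by
      obtain ⟨h0, h1⟩ := hχ01 x
      by_cases hx : x ∈ A <;> simp only [hx, indicator_of_mem, indicator_of_notMem,
        not_false_eq_true, Pi.one_apply, abs_le] <;> constructor <;> linarith
    rw [nnnorm_mul]
    exact mul_le_of_le_one_right zero_le habs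
  have hsupp : Function.support (fun x => a * (A.indicator 1 x - χ x)) ⊆
      {x | A.indicator 1 x ≠ χ x} :=
    fun x hx => sub_ne_zero.1 (right_ne_zero_of_mul hx)
  calc phiModular φ μ c (fun x => a * (A.indicator 1 x - χ x))
      ≤ C * μ (Function.support fun x => a * (A.indicator 1 x - χ x)) :=
        hφ.phiModular_le_mul_measure_support hC hbound
    _ ≤ C * (ε / C) := by gcongr; exact (measure_mono hsupp).trans hχA
    _ ≤ ε := ENNReal.mul_div_le

theorem indicator_simpleFunc (hΩ : IsOpen Ω) (hμ : ∀ᵐ x ∂μ, x ∈ Ω) (hφ : IsPhiIntegrand φ μ)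
    (hb : HasEssBoundedSlices φ μ) {A : Set (RSp n)} (hA : MeasurableSet A) (hAfin : μ A ≠ ∞)
    (s : SimpleFunc (RSp n) ℝ) : IsSmoothlyApproximable Ω φ μ (A.indicator s) := by
  induction s using SimpleFunc.induction with
  | @const a B hB =>
    have hAB := indicator_const hΩ hμ hφ hb (hA.inter hB)
      (measure_ne_top_of_subset inter_subset_left hAfin) a
    convert hAB using 1
    ext x
    by_cases hxA : x ∈ A <;> by_cases hxB : x ∈ B <;> simp [hxA, hxB]
  | @add s t _ hs ht =>
    rw [SimpleFunc.coe_add, indicator_add']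
    exact hs.add hφ (s.stronglyMeasurable.indicator hA).aestronglyMeasurable ht

theorem of_phiModular_ne_top (hΩ : IsOpen Ω) (hμ : ∀ᵐ x ∂μ, x ∈ Ω) (hφ : IsPhiIntegrand φ μ)
    (hb : HasEssBoundedSlices φ μ) (hf : AEStronglyMeasurable f μ)
    (hfin : ∀ c, phiModular φ μ c f ≠ ∞) : IsSmoothlyApproximable Ω φ μ f := by
  refine of_forall_exists hφ hf fun c ε hε => ?_
  obtain ⟨s, A, hA, hAfin, hs⟩ := hφ.exists_simpleFunc_phiModular_sub_le hf (hfin c) hε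
  exact ⟨A.indicator s, (s.stronglyMeasurable.indicator hA).aestronglyMeasurable,
    indicator_simpleFunc hΩ hμ hφ hb hA hAfin s, hs⟩

theorem exists_phiModular_add_lintegral_le (hΩ : IsOpen Ω) (hμ : ∀ᵐ x ∂μ, x ∈ Ω)
    (hφ : IsPhiIntegrand φ μ) (hb : HasEssBoundedSlices φ μ) (hf : Integrable f μ)
    (hfin : ∀ c, phiModular φ μ c f ≠ ∞) (c : ℝ≥0) {ε : ℝ≥0∞} (hε : 0 < ε) :
    ∃ g, SmoothCompactSupp Ω g ∧
      phiModular φ μ c (f - g) + c * ∫⁻ x, ‖(f - g) x‖₊ ∂μ ≤ ε := by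
  -- Adding the integrand `t` to `φ` turns the modular into `ρ_φ` plus the `L¹` norm.
  have happrox : IsSmoothlyApproximable Ω 
      (φ + fun (_ : RSp n) (t : ℝ≥0) => (t : ℝ≥0∞)) μ f := by
    refine of_phiModular_ne_top hΩ hμ (hφ.add isPhiIntegrand_coe) (hb.add hasEssBoundedSlices_coe)
      hf.aestronglyMeasurable fun c => ?_
    rw [hφ.phiModular_add_integrand hf.aestronglyMeasurable, phiModular_coe]
    exact ENNReal.add_ne_top.2 ⟨hfin c, ENNReal.mul_ne_top ENNReal.coe_ne_top hf.2.ne⟩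
  obtain ⟨g, hg, hfg⟩ := happrox c ε hε
  rw [hφ.phiModular_add_integrand (hf.aestronglyMeasurable.sub hg.aestronglyMeasurable),
    phiModular_coe] at hfg
  exact ⟨g, hg, hfg⟩

end IsSmoothlyApproximable

theorem IsPhiIntegrand.phiModular_sub_sub_integral_smul_le (hφ : IsPhiIntegrand φ μ)
    (hf : AEStronglyMeasurable f μ) (hg : AEStronglyMeasurable g μ) (η : RSp n → ℝ) (c : ℝ≥0) :
    phiModular φ μ c (f - (g - (∫ x, g x ∂μ) • η)) ≤
      phiModular φ μ (2 * c) (f - g) + phiModular φ μ (2 * c * ‖∫ x, g x ∂μ‖₊) η := by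
  refine (sub_add f g _ ▸ hφ.phiModular_add_le (hf.sub hg) c _).trans_eq ?_
  simp only [phiModular, Pi.smul_apply, nnnorm_smul, mul_assoc]

variable [IsLocallyFiniteMeasure μ]

theorem IsMeanZeroApproximable.of_integrable (hΩ : IsOpen Ω) (hμ : ∀ᵐ x ∂μ, x ∈ Ω)
    (hφ : IsPhiIntegrand φ μ) (hb : HasEssBoundedSlices φ μ) (hf : Integrable f μ)
    (hf0 : ∫ x, f x ∂μ = 0) (hfin : ∀ c, phiModular φ μ c f ≠ ∞) :
    IsMeanZeroApproximable Ω φ μ f := by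
  intro c ε hε
  rcases eq_or_ne (μ Ω) 0 with hΩ0 | hΩ0
  · have hμ0 : μ = 0 := by
      rw [← ae_eq_bot, ← eventually_false_iff_eq_bot]
      filter_upwards [hμ, measure_eq_zero_iff_ae_notMem.1 hΩ0] with x hx hx' using hx' hx
    exact ⟨0, .zero, by simp, by simp [phiModular, hμ0]⟩
  obtain ⟨η, hη, hη1, -, -⟩ :=
    exists_smoothCompactSupp_integral_eq_one (N := 0) hΩ (by simpa [pos_iff_ne_zero] using hΩ0)
  have hsmall := hφ.tendsto_phiModular_zero hη.aestronglyMeasurable one_pos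
    (hη.phiModular_ne_top hφ hb 1)
  obtain ⟨r, hr, hηr⟩ := NNReal.nhds_zero_basis.eventually_iff.1
    (hsmall.eventually (gt_mem_nhds (ENNReal.half_pos hε.ne')))
  obtain ⟨g, hg, hfg⟩ := IsSmoothlyApproximable.exists_phiModular_add_lintegral_le hΩ hμ hφ hb hf
    hfin (2 * c) (lt_min (ENNReal.half_pos hε.ne') (ENNReal.coe_pos.2 (half_pos hr)))
  have hmean : ∫ x, g x ∂μ = -∫ x, (f - g) x ∂μ := by
    simp only [Pi.sub_apply, integral_sub hf hg.integrable, hf0, zero_sub, neg_neg]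
  have hmean_le : 2 * c * ‖∫ x, g x ∂μ‖₊ ≤ r / 2 := by
    rw [← ENNReal.coe_le_coe, hmean, nnnorm_neg, ENNReal.coe_mul]
    calc ((2 * c : ℝ≥0) : ℝ≥0∞) * ‖∫ x, (f - g) x ∂μ‖₊
        ≤ (2 * c : ℝ≥0) * ∫⁻ x, ‖(f - g) x‖₊ ∂μ := by
          gcongr
          exact enorm_integral_le_lintegral_enorm _
      _ ≤ (r / 2 : ℝ≥0) := (le_add_self.trans hfg).trans (min_le_right _ _)
  refine ⟨_, hg.sub_integral_smul hη, hg.integral_sub_integral_smul_eq_zero hη hη1, ?_⟩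
  calc phiModular φ μ c (f - (g - (∫ x, g x ∂μ) • η))
      ≤ phiModular φ μ (2 * c) (f - g) + phiModular φ μ (2 * c * ‖∫ x, g x ∂μ‖₊) η :=
        hφ.phiModular_sub_sub_integral_smul_le hf.aestronglyMeasurable hg.aestronglyMeasurable η c
    _ ≤ ε / 2 + ε / 2 :=
        add_le_add ((le_self_add.trans hfg).trans (min_le_left _ _)) 
          (hηr (hmean_le.trans_lt (NNReal.half_lt_self hr.ne'))).le
    _ = ε := ENNReal.add_halves ε

theorem IsMeanZeroApproximable.of_measure_eq_top (hΩ : IsOpen Ω) (hμ : ∀ᵐ x ∂μ, x ∈ Ω)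
    (hφ : IsPhiIntegrand φ μ) (hb : HasEssBoundedSlices φ μ) (hφ0 : IsUniformLittleOAtZero φ μ)
    (hΩtop : μ Ω = ∞) (hf : AEStronglyMeasurable f μ) (hfin : ∀ c, phiModular φ μ c f ≠ ∞) :
    IsMeanZeroApproximable Ω φ μ f := by
  intro c ε hε
  obtain ⟨g, hg, hfg⟩ := IsSmoothlyApproximable.of_phiModular_ne_top hΩ hμ hφ hb hf hfin
    (2 * c) (ε / 2) (ENNReal.half_pos hε.ne')
  set s : ℝ≥0 := 2 * c * ‖∫ x, g x ∂μ‖₊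
  obtain ⟨κ, hκ, hκs⟩ : ∃ κ : ℝ≥0, 0 < κ ∧ κ * (s : ℝ≥0∞) ≤ ε / 2 := by
    obtain ⟨κ, hκ, hκlt⟩ := ENNReal.exists_nnreal_pos_mul_lt (ENNReal.coe_ne_top (r := s))
      (ENNReal.half_pos hε.ne').ne'
    exact ⟨κ, hκ, hκlt.le⟩
  obtain ⟨δ, hδ, hmod⟩ := hφ0.phiModular_le (E := ℝ) hκ
  -- The correction `s η` has fixed integral `s`, but height at most `δ` once `η` is spread thinly.
  obtain ⟨η, hη, hη1, hηnorm, hηle⟩ :=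
    exists_smoothCompactSupp_integral_eq_one (N := s / δ) hΩ (hΩtop ▸ ENNReal.coe_lt_top)
  have hheight : ∀ x, s * ‖η x‖₊ ≤ δ := fun x => by
    simpa [div_mul_eq_mul_div, div_le_one hδ] using hηle x
  refine ⟨_, hg.sub_integral_smul hη, hg.integral_sub_integral_smul_eq_zero hη hη1, ?_⟩
  calc phiModular φ μ c (f - (g - (∫ x, g x ∂μ) • η))
      ≤ phiModular φ μ (2 * c) (f - g) + phiModular φ μ s η :=
        hφ.phiModular_sub_sub_integral_smul_le hf hg.aestronglyMeasurable η c
    _ ≤ ε / 2 + κ * (s * 1) := add_le_add hfg (hηnorm ▸ hmod s η hheight)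
    _ ≤ ε / 2 + ε / 2 := by gcongr; rwa [mul_one]
    _ = ε := ENNReal.add_halves ε

end Density

section Orlicz

variable {n : ℕ} {Ω : Set (RSp n)} {φ : RSp n → ℝ≥0 → ℝ≥0∞} {f : RSp n → ℝ}

theorem orliczNorm_le_of_phiModular_le_one {l : ℝ≥0} (hl : 0 < l)
    (h : phiModular φ (volume.restrict Ω) l⁻¹ f ≤ 1) : orliczNorm φ Ω f ≤ l :=
  sInf_le ⟨l, ⟨hl, by simpa only [phiModular, div_eq_inv_mul] using h⟩, rfl⟩

theorem IsMeanZeroApproximable.exists_orliczNorm_sub_lt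
    (hf : IsMeanZeroApproximable Ω φ (volume.restrict Ω) f) {ε : ℝ≥0∞} (hε : 0 < ε) :
    ∃ g : RSp n → ℝ, SmoothCompactSupp Ω g ∧ ∫ x in Ω, g x = 0 ∧
      orliczNorm φ Ω (fun x => f x - g x) < ε := by
  obtain ⟨l, hl, hlε⟩ := ENNReal.lt_iff_exists_nnreal_btwn.1 hε
  obtain ⟨g, hg, hg0, hfg⟩ := hf l⁻¹ 1 one_pos
  exact ⟨g, hg, hg0,
    (orliczNorm_le_of_phiModular_le_one (ENNReal.coe_pos.1 hl) hfg).trans_lt hlε⟩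

theorem MemOrlicz.phiModular_ne_top (hf : MemOrlicz φ Ω f)
    (hφ : IsPhiIntegrand φ (volume.restrict Ω)) (hΔ : IsDoubling φ (volume.restrict Ω))
    (c : ℝ≥0) : phiModular φ (volume.restrict Ω) c f ≠ ∞ := by
  obtain ⟨-, c₀, hc₀, hfin⟩ := hf
  exact hφ.phiModular_ne_top_of_isDoubling hΔ hc₀ hfin.ne c

theorem IsWeakPhi.isPhiIntegrand (hφ : IsWeakPhi Ω φ) (hΩ : MeasurableSet Ω) :
    IsPhiIntegrand φ (volume.restrict Ω) where
  aemeasurable_comp_of_measurable := hφ.meas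
  monotone := (ae_restrict_mem hΩ).mono hφ.mono
  tendsto_zero := by
    filter_upwards [ae_restrict_mem hΩ] with x hx
    have hIoi : {0}ᶜ = Ioi (0 : ℝ≥0) := by ext; simp [pos_iff_ne_zero]
    have h : ContinuousAt (φ x) 0 := by
      rw [continuousAt_iff_punctured_nhds, hIoi, hφ.zero x hx]
      exact hφ.lim_zero x hx
    simpa only [hφ.zero x hx] using h.tendsto

theorem A0.exists_ae_le_one (h : A0 Ω φ) :
    ∃ b : ℝ≥0, 0 < b ∧ ∀ᵐ x ∂(volume.restrict Ω), φ x b ≤ 1 := by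
  obtain ⟨β, hβ, -, h⟩ := h
  refine ⟨β / 2, half_pos hβ, ?_⟩
  filter_upwards [h] with x hx
  by_contra! hlt
  have hinv : phiInv φ x 1 ≤ (β / 2 : ℝ≥0) := sInf_le ⟨β / 2, hlt.le, rfl⟩
  exact (NNReal.half_lt_self hβ.ne').not_ge (ENNReal.coe_le_coe.1 (hx.1.trans hinv))

theorem le_mul_of_div_rpow_le {a b : ℝ≥0∞} {L s t : ℝ≥0} {q : ℝ} (hs : 0 < s) (ht : 0 < t)
    (h : a / (s : ℝ≥0∞) ^ q ≤ L * (b / (t : ℝ≥0∞) ^ q)) : a ≤ (L * (s / t) ^ q : ℝ≥0) * b := by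
  rw [← ENNReal.coe_rpow_of_ne_zero hs.ne', ← ENNReal.coe_rpow_of_ne_zero ht.ne',
    ENNReal.div_le_iff (by simp [hs.ne']) ENNReal.coe_ne_top] at h
  refine h.trans_eq ?_
  rw [NNReal.div_rpow, ENNReal.coe_mul, ENNReal.coe_div (by simp [ht.ne'])]
  simp only [div_eq_mul_inv]
  ring

theorem ADec.isDoubling {q : ℝ} (h : ADec q Ω φ) (hΩ : MeasurableSet Ω)
    (hzero : ∀ x ∈ Ω, φ x 0 = 0) : IsDoubling φ (volume.restrict Ω) := by
  obtain ⟨L, -, hL⟩ := h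
  refine ⟨L * 2 ^ q, ?_⟩
  filter_upwards [ae_restrict_mem hΩ] with x hx t
  rcases eq_zero_or_pos t with rfl | ht
  · simp [hzero x hx]
  · have hlt : t < 2 * t := lt_two_mul_self ht
    simpa [ht.ne'] using le_mul_of_div_rpow_le (ht.trans hlt) ht (hL x hx t (2 * t) ht hlt)

theorem AInc.isUniformLittleOAtZero {p : ℝ} (hp : 1 < p) (h : AInc p Ω φ) (hΩ : MeasurableSet Ω)
    (hzero : ∀ x ∈ Ω, φ x 0 = 0) {b : ℝ≥0} (hb : 0 < b)
    (hb1 : ∀ᵐ x ∂(volume.restrict Ω), φ x b ≤ 1) :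
    IsUniformLittleOAtZero φ (volume.restrict Ω) := by
  obtain ⟨L, -, hL⟩ := h
  intro ε hε
  have hlim : Tendsto (fun t : ℝ≥0 => L / b ^ p * t ^ (p - 1)) (𝓝 0) (𝓝 0) := by
    have hcont : ContinuousAt (fun t : ℝ≥0 => L / b ^ p * t ^ (p - 1)) 0 :=
      (NNReal.continuousAt_rpow_const (.inr (sub_pos.2 hp).le)).const_mul _
    simpa [NNReal.zero_rpow (sub_pos.2 hp).ne'] using hcont.tendsto
  obtain ⟨δ, hδ, hsmall⟩ := NNReal.nhds_zero_basis.eventually_iff.1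
    ((hlim.eventually (gt_mem_nhds hε)).and (gt_mem_nhds hb))
  refine ⟨δ / 2, half_pos hδ, ?_⟩
  filter_upwards [hb1, ae_restrict_mem hΩ] with x hx hxΩ t ht
  rcases eq_zero_or_pos t with rfl | ht0
  · simp [hzero x hxΩ]
  obtain ⟨htε, htb⟩ := hsmall (ht.trans_lt (NNReal.half_lt_self hδ.ne'))
  have hsplit : L * (t / b) ^ p = L / b ^ p * t ^ (p - 1) * t := by
    rw [NNReal.div_rpow, mul_assoc, ← NNReal.rpow_add_one ht0.ne', sub_add_cancel]
    ring
  calc φ x t ≤ (L * (t / b) ^ p : ℝ≥0) * φ x b :=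
        le_mul_of_div_rpow_le ht0 hb (hL x hxΩ t b ht0 htb)
    _ ≤ (L * (t / b) ^ p : ℝ≥0) := mul_le_of_le_one_right zero_le hx
    _ ≤ (ε * t : ℝ≥0) := by rw [hsplit]; gcongr

end Orlicz

theorem statement7_general {n : ℕ} {Ω : Set (RSp n)} (hΩ : IsOpen Ω) {φ : RSp n → ℝ≥0 → ℝ≥0∞}
    (hφ : IsWeakPhi Ω φ) (ha0 : A0 Ω φ) {q : ℝ} (hdec : ADec q Ω φ) :
    (∀ f : RSp n → ℝ, MemOrlicz φ Ω f → IntegrableOn f Ω → ∫ x in Ω, f x = 0 →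
      ∀ ε : ℝ≥0∞, 0 < ε → ∃ g : RSp n → ℝ, SmoothCompactSupp Ω g ∧
        ∫ x in Ω, g x = 0 ∧ orliczNorm φ Ω (fun x => f x - g x) < ε) ∧
    (volume Ω = ∞ → (∃ p : ℝ, 1 < p ∧ AInc p Ω φ) → ∀ f : RSp n → ℝ, MemOrlicz φ Ω f →
      ∀ ε : ℝ≥0∞, 0 < ε → ∃ g : RSp n → ℝ, SmoothCompactSupp Ω g ∧
        ∫ x in Ω, g x = 0 ∧ orliczNorm φ Ω (fun x => f x - g x) < ε) := by
  have hmeas := hΩ.measurableSet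
  have hmem : ∀ᵐ x ∂(volume.restrict Ω), x ∈ Ω := ae_restrict_mem hmeas
  have hint := hφ.isPhiIntegrand hmeas
  have hΔ := hdec.isDoubling hmeas hφ.zero
  obtain ⟨b, hb, hb1⟩ := ha0.exists_ae_le_one
  have hbdd := hΔ.hasEssBoundedSlices hint.monotone hb (C := 1) (by simpa using hb1)
  constructor
  · intro f hf hfi hf0 ε hε
    exact (IsMeanZeroApproximable.of_integrable hΩ hmem hint hbdd hfi hf0
      (hf.phiModular_ne_top hint hΔ)).exists_orliczNorm_sub_lt hε
  · rintro hvol ⟨p, hp, hinc⟩ f hf ε hε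
    exact (IsMeanZeroApproximable.of_measure_eq_top hΩ hmem hint hbdd
      (hinc.isUniformLittleOAtZero hp hmeas hφ.zero hb hb1)
      (by rwa [Measure.restrict_apply_self]) hf.1.aestronglyMeasurable
      (hf.phiModular_ne_top hint hΔ)).exists_orliczNorm_sub_lt hε

/-- density of mean-zero smooth compactly supported functions:
in `L^φ_0(Ω)` when `|Ω| < ∞`, and in `L^φ(Ω)` when `|Ω| = ∞` and `φ` satisfies
`(aInc)_p` for some `p > 1`. -/
theorem statement7 {n : ℕ} (Ω : Set (RSp n)) (hΩ : IsOpen Ω)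
    (φ : RSp n → ℝ≥0 → ℝ≥0∞) (hφ : IsWeakPhi Ω φ)
    (ha0 : A0 Ω φ) (q : ℝ) (hdec : ADec q Ω φ) :
    (volume Ω < ∞ →
      ∀ f : RSp n → ℝ, MemOrlicz φ Ω f → IntegrableOn f Ω volume →
        (∫ x in Ω, f x) = 0 →
        ∀ ε : ℝ≥0∞, 0 < ε → ∃ g : RSp n → ℝ, SmoothCompactSupp Ω g ∧
          (∫ x in Ω, g x) = 0 ∧ orliczNorm φ Ω (fun x => f x - g x) < ε) ∧
    (volume Ω = ∞ → (∃ p : ℝ, 1 < p ∧ AInc p Ω φ) →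
      ∀ f : RSp n → ℝ, MemOrlicz φ Ω f →
        ∀ ε : ℝ≥0∞, 0 < ε → ∃ g : RSp n → ℝ, SmoothCompactSupp Ω g ∧
          (∫ x in Ω, g x) = 0 ∧ orliczNorm φ Ω (fun x => f x - g x) < ε) := by
  exact (statement7_general hΩ hφ ha0 hdec).imp_left fun h _ => h
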